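/- Let (Ω, μ) be a measure space with μ(Ω) < ∞, let λ > 0, ε > 0, D > 0, c > 0, and let p, q, u, v : Ω → ℝ be measurable functions with c ≤ u(x) ≤ D and c ≤ v(x) for all x ∈ Ω, and with p² - q² and u - v integrable. Define A = { x ∈ Ω : p(x)² ≤ 1 - (λ+ε)²/u(x)² } and B = { x ∈ Ω : q(x)² ≤ 1 - λ²/v(x)² }, and set K = (2ελ + ε²)/D². Then μ(A \ B) ≤ (2/K) ∫_Ω |q(x)² - p(x)²| dμ(x) + (4λ²/(c³ K)) ∫_Ω |u(x) - v(x)| dμ(x). -/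

import Mathlib

open MeasureTheory

/-!
At a point of `A \ B` one has `p² + (λ+ε)²/u² ≤ 1 < q² + λ²/v²`, hence
`((λ+ε)² - λ²)/u² < q² - p² + λ² (1/v² - 1/u²)`. The left side is at least `K`, while
`t ↦ 1/t²` is `2/c³`-Lipschitz on `[c, ∞)`. So `|q² - p²| + (2λ²/c³) |u - v|` is at least `K`
on `A \ B`, and Chebyshev–Markov bounds the measure of that set by half of the right-hand side.
-/

section Pointwise

variable {𝕜 : Type*} [Field 𝕜] [LinearOrder 𝕜] [IsStrictOrderedRing 𝕜]

theorem abs_one_div_sq_sub_one_div_sq_le {a b c : 𝕜} (hc : 0 < c) (hca : c ≤ a) (hcb : c ≤ b) :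
    |1 / a ^ 2 - 1 / b ^ 2| ≤ 2 / c ^ 3 * |a - b| := by
  have ha : 0 < a := hc.trans_le hca
  have hb : 0 < b := hc.trans_le hcb
  calc |1 / a ^ 2 - 1 / b ^ 2|
      = |1 / a * (1 / b) * (1 / a + 1 / b) * (b - a)| := by
        congr 1
        field_simp
        ring
    _ = 1 / a * (1 / b) * (1 / a + 1 / b) * |a - b| := by
        rw [abs_mul, abs_of_pos (by positivity), abs_sub_comm]
    _ ≤ 1 / c * (1 / c) * (1 / c + 1 / c) * |a - b| := by gcongr
    _ = 2 / c ^ 3 * |a - b| := by ring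

theorem sub_le_sq_mul_of_le_sub_div_of_sub_div_lt {α β c D t a b x y : 𝕜} (hα : 0 ≤ α)
    (hc : 0 < c) (hcx : c ≤ x) (hxD : x ≤ D) (hcy : c ≤ y)
    (ha : a ≤ t - β / x ^ 2) (hb : t - α / y ^ 2 < b) :
    β - α ≤ D ^ 2 * (|b - a| + 2 * α / c ^ 3 * |x - y|) := by
  have hx : 0 < x := hc.trans_le hcx
  have hinv : 1 / y ^ 2 - 1 / x ^ 2 ≤ 2 / c ^ 3 * |x - y| := by
    rw [abs_sub_comm x y]
    exact le_of_abs_le (abs_one_div_sq_sub_one_div_sq_le hc hcy hcx)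
  have hab : b - a ≤ |b - a| := le_abs_self _
  calc β - α
      = x ^ 2 * (β / x ^ 2 - α / y ^ 2 + α * (1 / y ^ 2 - 1 / x ^ 2)) := by
        field_simp
        ring
    _ ≤ x ^ 2 * (|b - a| + α * (2 / c ^ 3 * |x - y|)) := by
        gcongr
        linarith
    _ = x ^ 2 * (|b - a| + 2 * α / c ^ 3 * |x - y|) := by ring
    _ ≤ D ^ 2 * (|b - a| + 2 * α / c ^ 3 * |x - y|) := by gcongr

end Pointwise

section Measure

variable {Ω : Type*} [MeasurableSpace Ω] {μ : Measure Ω}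

theorem measure_le_ofReal_integral_div {f : Ω → ℝ} {s : Set Ω} {κ : ℝ} (hκ : 0 < κ)
    (hf : Integrable f μ) (hf_nonneg : 0 ≤ᵐ[μ] f) (hs : ∀ᵐ x ∂μ, x ∈ s → κ ≤ f x) :
    μ s ≤ ENNReal.ofReal ((∫ x, f x ∂μ) / κ) := by
  calc μ s
      ≤ μ {x | ENNReal.ofReal κ ≤ ENNReal.ofReal (f x)} :=
        measure_mono_ae (hs.mono fun _ h hx => ENNReal.ofReal_le_ofReal (h hx))
    _ ≤ (∫⁻ x, ENNReal.ofReal (f x) ∂μ) / ENNReal.ofReal κ :=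
        meas_ge_le_lintegral_div hf.aemeasurable.ennreal_ofReal
          (ENNReal.ofReal_pos.2 hκ).ne' ENNReal.ofReal_ne_top
    _ = ENNReal.ofReal ((∫ x, f x ∂μ) / κ) := by
        rw [← ofReal_integral_eq_lintegral_ofReal hf hf_nonneg, ENNReal.ofReal_div_of_pos hκ]

theorem stmt_9_general {f g u v : Ω → ℝ} {α β c D t K : ℝ} (hα : 0 ≤ α) (hαβ : α < β)
    (hc : 0 < c) (huc : ∀ᵐ x ∂μ, c ≤ u x) (huD : ∀ᵐ x ∂μ, u x ≤ D) (hvc : ∀ᵐ x ∂μ, c ≤ v x)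
    (hfg : Integrable (fun x => f x - g x) μ) (huv : Integrable (fun x => u x - v x) μ)
    (hK : K = (β - α) / D ^ 2) :
    μ ({x | f x ≤ t - β / u x ^ 2} \ {x | g x ≤ t - α / v x ^ 2}) ≤
      ENNReal.ofReal (1 / K * ∫ x, |g x - f x| ∂μ +
        2 * α / (c ^ 3 * K) * ∫ x, |u x - v x| ∂μ) := by
  have hgf_abs : Integrable (fun x => |g x - f x|) μ := by
    simpa only [abs_sub_comm] using hfg.abs
  have huv_weighted : Integrable (fun x => 2 * α / c ^ 3 * |u x - v x|) μ :=
    huv.abs.const_mul _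
  have hlower : ∀ᵐ x ∂μ, x ∈ {x | f x ≤ t - β / u x ^ 2} \ {x | g x ≤ t - α / v x ^ 2} →
      β - α ≤ D ^ 2 * (|g x - f x| + 2 * α / c ^ 3 * |u x - v x|) := by
    filter_upwards [huc, huD, hvc] with x hcu huD hcv ⟨hA, hB⟩
    exact sub_le_sq_mul_of_le_sub_div_of_sub_div_lt hα hc hcu huD hcv hA (not_le.1 hB)
  refine (measure_le_ofReal_integral_div (sub_pos.2 hαβ)
    ((hgf_abs.fun_add huv_weighted).const_mul (D ^ 2))
    (ae_of_all _ fun x => by dsimp only [Pi.zero_apply]; positivity) hlower).trans_eq ?_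
  rw [integral_const_mul, integral_add hgf_abs huv_weighted, integral_const_mul, hK]
  congr 1
  simp only [div_eq_mul_inv, mul_inv, inv_inv]
  ring

end Measure

/-- Abstract, quantitative form of the convergence in measure of the discrete elastic
sets: with `A = {p² ≤ 1 - (λ+ε)²/u²}`, `B = {q² ≤ 1 - λ²/v²}` and
`K = (2ελ + ε²)/D²`, one has
`μ(A \ B) ≤ (2/K) ∫ |q² - p²| + (4λ²/(c³ K)) ∫ |u - v|`. -/
theorem stmt_9 {Ω : Type*} [MeasurableSpace Ω] (μ : Measure Ω) [IsFiniteMeasure μ]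
    (lam ε D c : ℝ) (hlam : 0 < lam) (hε : 0 < ε) (hD : 0 < D) (hc : 0 < c)
    (p q u v : Ω → ℝ)
    (hp : Measurable p) (hq : Measurable q) (hu : Measurable u) (hv : Measurable v)
    (huc : ∀ x, c ≤ u x) (huD : ∀ x, u x ≤ D) (hvc : ∀ x, c ≤ v x)
    (hpq : Integrable (fun x => p x ^ 2 - q x ^ 2) μ)
    (huv : Integrable (fun x => u x - v x) μ)
    (A B : Set Ω)
    (hA : A = {x | p x ^ 2 ≤ 1 - (lam + ε) ^ 2 / u x ^ 2})
    (hB : B = {x | q x ^ 2 ≤ 1 - lam ^ 2 / v x ^ 2})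
    (K : ℝ) (hK : K = (2 * ε * lam + ε ^ 2) / D ^ 2) :
    (μ (A \ B)).toReal ≤
      (2 / K) * ∫ x, |q x ^ 2 - p x ^ 2| ∂μ +
        (4 * lam ^ 2 / (c ^ 3 * K)) * ∫ x, |u x - v x| ∂μ := by
  have hlevels : lam ^ 2 < (lam + ε) ^ 2 := by gcongr; linarith
  have hK_pos : 0 < K := by rw [hK]; positivity
  have hsharp := stmt_9_general (t := 1) (K := K) (sq_nonneg lam) hlevels hc (ae_of_all μ huc)
    (ae_of_all μ huD) (ae_of_all μ hvc) hpq huv (by rw [hK]; ring)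
  rw [← hA, ← hB] at hsharp
  refine (ENNReal.toReal_le_of_le_ofReal (by positivity) hsharp).trans ?_
  gcongr <;> norm_num
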